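/- Let N ∈ ℕ and let q, b, t ∈ ℂ satisfy (q;q)_N ≠ 0, (bq;q)_N ≠ 0 and (t;q)_N ≠ 0. Then (t;q)_N (bq;q)_N / (q;q)_N · F_N(0,b;t) = Σ_{n=0}^{N} (b;q)_n (t;q)_n q^n / (q;q)_n. -/

import Mathlib

/-!
After cancelling the common factors, the left-hand side is
`L_N(b) = ∑ n ≤ N, (bq;q)_N / (bq;q)_n * t^n * (t;q)_{N-n} / (q;q)_{N-n}`.
Splitting off the term `n = 0` and using `(bq;q)_{n+1} = (1 - bq) (bq²;q)_n` in the others gives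
`L_{N+1}(b) = (bq;q)_{N+1} (t;q)_{N+1} / (q;q)_{N+1} + t * L_N(bq)`.
The right-hand side `R_N(b)` satisfies the same recursion (`rhs_rec`): subtracting the recursion
for `R_N(b)` from that for `R_{N+1}(b)` and dividing by `(bq;q)_N (t;q)_N / (q;q)_{N+1}` leaves
`(1 - b) (1 - t x) q x = (1 - t x) (1 - b q x) - (1 - q x) + t x (1 - q x)` with `x = q ^ N`.
As `L_0 = R_0 = 1`, the two agree by induction on `N`, for all `b` simultaneously.
-/

open Finset

/-- The q-Pochhammer symbol (z; q)_n = prod_{j=0}^{n-1} (1 - z q^j). -/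
noncomputable def qPoch (q z : ℂ) (n : ℕ) : ℂ :=
  ∏ j ∈ Finset.range n, (1 - z * q ^ j)

/-- The Gaussian binomial coefficient [N, n]_q = (q;q)_N / ((q;q)_n (q;q)_{N-n}). -/
noncomputable def qBinom (q : ℂ) (N n : ℕ) : ℂ :=
  qPoch q q N / (qPoch q q n * qPoch q q (N - n))

/-- The finite analogue of Fine's function,
F_N(a, b; t) = sum_{n=0}^{N} [N,n]_q (aq;q)_n (t;q)_{N-n} (q;q)_n t^n / ((bq;q)_n (t;q)_N). -/
noncomputable def fineF (q a b t : ℂ) (N : ℕ) : ℂ :=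
  ∑ n ∈ Finset.range (N + 1),
    qBinom q N n * (qPoch q (a * q) n * qPoch q t (N - n) * qPoch q q n * t ^ n) /
      (qPoch q (b * q) n * qPoch q t N)

lemma qPoch_zero (q z : ℂ) : qPoch q z 0 = 1 := by simp [qPoch]

lemma qPoch_succ (q z : ℂ) (n : ℕ) : qPoch q z (n + 1) = qPoch q z n * (1 - z * q ^ n) := by
  simp [qPoch, Finset.prod_range_succ]

lemma qPoch_succ' (q z : ℂ) (n : ℕ) : qPoch q z (n + 1) = (1 - z) * qPoch q (z * q) n := by
  simp only [qPoch, Finset.prod_range_succ', pow_zero, mul_one]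
  rw [mul_comm]
  congr 1
  refine Finset.prod_congr rfl fun j _ => ?_
  ring

lemma qPoch_ne_zero_of_le {q z : ℂ} {m n : ℕ} (h : m ≤ n) (hn : qPoch q z n ≠ 0) :
    qPoch q z m ≠ 0 := by
  simp only [qPoch, Finset.prod_ne_zero_iff, Finset.mem_range] at hn ⊢
  exact fun j hj => hn j (hj.trans_le h)

/-- The recursion in `N`, shifting `b` to `b * q`, for the right-hand side. -/
lemma rhs_rec (N : ℕ) (q b t : ℂ) (hq : qPoch q q (N + 1) ≠ 0) :
    ∑ n ∈ Finset.range (N + 2), qPoch q b n * qPoch q t n * q ^ n / qPoch q q n =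
      qPoch q (b * q) (N + 1) * qPoch q t (N + 1) / qPoch q q (N + 1) +
      t * ∑ n ∈ Finset.range (N + 1),
        qPoch q (b * q) n * qPoch q t n * q ^ n / qPoch q q n := by
  induction N with
  | zero =>
    have h : (1 : ℂ) - q ≠ 0 := by simpa [qPoch] using hq
    simp [Finset.sum_range_succ, qPoch]
    field_simp
    ring
  | succ N ih =>
    have hq' := qPoch_ne_zero_of_le (Nat.le_succ (N + 1)) hq
    rw [Finset.sum_range_succ, ih hq', Finset.sum_range_succ _ (N + 1),
      qPoch_succ' q b (N + 1), qPoch_succ q t (N + 1), qPoch_succ q (b * q) (N + 1)]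
    rw [qPoch_succ q q (N + 1)] at hq ⊢
    have h2 := right_ne_zero_of_mul hq
    field_simp
    ring

/-- The left-hand side after cancellation of the common factors. -/
lemma reduced_identity (N : ℕ) (q b t : ℂ) (hq : qPoch q q N ≠ 0)
    (hb : qPoch q (b * q) N ≠ 0) :
    ∑ n ∈ Finset.range (N + 1), qPoch q (b * q) N / qPoch q (b * q) n * t ^ n *
        qPoch q t (N - n) / qPoch q q (N - n) =
      ∑ n ∈ Finset.range (N + 1), qPoch q b n * qPoch q t n * q ^ n / qPoch q q n := by
  induction N generalizing b with
  | zero => simp [qPoch_zero]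
  | succ N ih =>
    have hb' := hb
    rw [qPoch_succ'] at hb'
    have h1 := left_ne_zero_of_mul hb'
    rw [rhs_rec N q b t hq, ← ih (b * q) (qPoch_ne_zero_of_le (Nat.le_succ N) hq)
      (right_ne_zero_of_mul hb'), Finset.sum_range_succ', add_comm, Finset.mul_sum]
    congr 1
    · simp [qPoch_zero]
    · refine Finset.sum_congr rfl fun n _ => ?_
      rw [qPoch_succ' q (b * q) N, qPoch_succ' q (b * q) n, mul_div_mul_left _ _ h1,
        Nat.add_sub_add_right]
      ring

theorem fineF_zero_b_product (N : ℕ) (q b t : ℂ)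
    (hq : qPoch q q N ≠ 0) (hb : qPoch q (b * q) N ≠ 0) (ht : qPoch q t N ≠ 0) :
    qPoch q t N * qPoch q (b * q) N / qPoch q q N * fineF q 0 b t N =
      ∑ n ∈ Finset.range (N + 1),
        qPoch q b n * qPoch q t n * q ^ n / qPoch q q n := by
  rw [← reduced_identity N q b t hq hb, fineF, Finset.mul_sum]
  refine Finset.sum_congr rfl fun n hn => ?_
  have hn' : n ≤ N := Nat.lt_succ_iff.mp (Finset.mem_range.mp hn)
  have h1 := qPoch_ne_zero_of_le hn' hq
  have h2 := qPoch_ne_zero_of_le (Nat.sub_le N n) hq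
  have h3 := qPoch_ne_zero_of_le hn' hb
  have h0 : qPoch q (0 * q) n = 1 := by simp [qPoch]
  rw [h0, qBinom]
  field_simp
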